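/- arXiv:1010.2597 — 2 statements merged into one kernel-verified Lean document; each statement's English description precedes it below -/
import Mathlib

section
/- For every k ≥ 1 and every partial computable function f : ℕ^k ⇀ ℕ there exists a λ-term M such that for every (n₁,…,n_k) ∈ ℕ^k: (i) M⌜n₁⌝⋯⌜n_k⌝ has a normal form if and only if f(n₁,…,n_k) is defined, and (ii) if f(n₁,…,n_k) is defined then M⌜n₁⌝⋯⌜n_k⌝ →* ⌜f(n₁,…,n_k)⌝. -/
/-!
A partial computable `f` has a Kleene normal form: `f v` is found by searching for the first `n` at
which a primitive recursive `h (n, v)` is nonzero, and it is then the predecessor of that value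
(`exists_normal_form`, obtained from the step-bounded evaluator of `Nat.Partrec.Code`).

Tuples of arguments are encoded as nested pairs `λz. z a b`, so that every primitive recursive
function is represented by a closed term acting on one encoded list
(`represented_of_primrec'`, by induction on `Nat.Primrec'`; recursion is by self-application). A
numeral `⌜n + 1⌝` is itself the pair of `Kfalse` and `⌜n⌝`, so the zero test and the predecessor
are the two projections. If `H` represents `h`, a self-applicative loop `search H n p` tests
`h (n, v)` and passes to `search H (n + 1) p` or returns the predecessor. When `f v` is defined the
loop reduces to the numeral of `f v`, which is normal.

When `f v` is undefined, the loop has to be shown to have no normal form. Standardization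
(`Star.std`) rewrites every reduction as a standard one, whence two facts about weak head reduction,
which is deterministic: a term with a normal form has a finite weak head reduction
(`Star.exists_whnf`), and a term that β-reduces to `Ktrue` already selects its first argument by
weak head steps (`Star.select_true`). By the latter each failed test takes the loop from one stage
to the next by at least one weak head step, so its weak head reduction is infinite
(`no_whnf_of_progress`), and by the former there is no normal form. Currying the arguments
(`curryN_apps`) uses weak head steps only, so this carries over to the curried term.
-/


inductive Lam : Type
  | var : ℕ → Lam
  | app : Lam → Lam → Lam
  | lam : Lam → Lam
  deriving DecidableEq

namespace Lam

def lift (d : ℕ) : Lam → Lam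
  | var n => if n < d then var n else var (n + 1)
  | app M N => app (lift d M) (lift d N)
  | lam M => lam (lift (d + 1) M)

def subst : Lam → ℕ → Lam → Lam
  | var n, k, N => if n = k then N else if k < n then var (n - 1) else var n
  | app A B, k, N => app (subst A k N) (subst B k N)
  | lam A, k, N => lam (subst A (k + 1) (lift 0 N))

inductive Step : Lam → Lam → Prop
  | beta (M N : Lam) : Step (app (lam M) N) (subst M 0 N)
  | appL {M M' : Lam} (N : Lam) : Step M M' → Step (app M N) (app M' N)
  | appR (M : Lam) {N N' : Lam} : Step N N' → Step (app M N) (app M N')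
  | abs {M M' : Lam} : Step M M' → Step (lam M) (lam M')

def StepN : ℕ → Lam → Lam → Prop
  | 0, M, N => M = N
  | i + 1, M, N => ∃ P, StepN i M P ∧ Step P N

def Star : Lam → Lam → Prop := Relation.ReflTransGen Step

def hasRedex : Lam → Bool
  | var _ => false
  | lam M => hasRedex M
  | app (lam _) _ => true
  | app M N => hasRedex M || hasRedex N

def IsNormal (M : Lam) : Prop := hasRedex M = false

def apps : Lam → List Lam → Lam := List.foldl app

def Ktrue : Lam := lam (lam (var 1))
def Kfalse : Lam := lam (lam (var 0))

def num : ℕ → Lam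
  | 0 => lam (app (app (var 0) Ktrue) Kfalse)
  | n + 1 => lam (app (app (var 0) Kfalse) (num n))

inductive Chain : Lam → List Lam → Lam → Prop
  | nil (M : Lam) : Chain M [] M
  | cons {M N P : Lam} {l : List Lam} : Step M N → Chain N l P → Chain M (N :: l) P

inductive LStep : Lam → Lam → Prop
  | beta (M N : Lam) : LStep (app (lam M) N) (subst M 0 N)
  | abs {M M' : Lam} : LStep M M' → LStep (lam M) (lam M')
  | appL {M M' : Lam} (N : Lam) : (∀ A, M ≠ lam A) → LStep M M' → LStep (app M N) (app M' N)
  | appR (M : Lam) {N N' : Lam} : (∀ A, M ≠ lam A) → IsNormal M → LStep N N' → LStep (app M N) (app M N')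

def LStepN : ℕ → Lam → Lam → Prop
  | 0, M, N => M = N
  | i + 1, M, N => ∃ P, LStepN i M P ∧ LStep P N

def redexCount : Lam → ℕ
  | var _ => 0
  | lam M => redexCount M
  | app (lam M) N => redexCount M + redexCount N + 1
  | app M N => redexCount M + redexCount N



/-! ### Commutation of lifting and substitution -/

theorem lift_lift (M : Lam) : ∀ {d e : ℕ}, d ≤ e → lift d (lift e M) = lift (e + 1) (lift d M) := by
  induction M with
  | var n => intro d e h; simp only [lift]; split_ifs <;> simp only [lift] <;> split_ifs <;> grind
  | app A B ihA ihB => intro d e h; simp [lift, ihA h, ihB h]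
  | lam A ih => intro d e h; simp [lift, ih (Nat.succ_le_succ h)]

theorem subst_lift (M : Lam) : ∀ (k : ℕ) (N : Lam), subst (lift k M) k N = M := by
  induction M with
  | var n => intro k N; simp only [lift]; split_ifs <;> simp only [subst] <;> split_ifs <;> grind
  | app A B ihA ihB => intro k N; simp [lift, subst, ihA, ihB]
  | lam A ih => intro k N; simp [lift, subst, ih]

theorem lift_subst_of_le (M : Lam) : ∀ {d k : ℕ} (N : Lam), d ≤ k →
    lift d (subst M k N) = subst (lift d M) (k + 1) (lift d N) := by
  induction M with
  | var n =>
    intro d k N h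
    simp only [lift, subst]
    split_ifs <;> simp only [lift, subst] <;> split_ifs <;> grind
  | app A B ihA ihB => intro d k N h; simp [lift, subst, ihA N h, ihB N h]
  | lam A ih =>
    intro d k N h
    simp [lift, subst, ih _ (Nat.succ_le_succ h), lift_lift N (Nat.zero_le d)]

theorem lift_subst_of_ge (M : Lam) : ∀ {d k : ℕ} (N : Lam), k ≤ d →
    lift d (subst M k N) = subst (lift (d + 1) M) k (lift d N) := by
  induction M with
  | var n =>
    intro d k N h
    simp only [lift, subst]
    split_ifs <;> simp only [lift, subst] <;> split_ifs <;> grind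
  | app A B ihA ihB => intro d k N h; simp [lift, subst, ihA N h, ihB N h]
  | lam A ih =>
    intro d k N h
    simp [lift, subst, ih _ (Nat.succ_le_succ h), lift_lift N (Nat.zero_le d)]

theorem subst_subst (M : Lam) : ∀ {j k : ℕ} (N P : Lam), j ≤ k →
    subst (subst M j N) k P = subst (subst M (k + 1) (lift j P)) j (subst N k P) := by
  induction M with
  | var n =>
    intro j k N P h
    rcases lt_trichotomy n j with h1 | h1 | h1
    · simp [subst, show n ≠ j by omega, show ¬ j < n by omega, show n ≠ k by omega,
        show ¬ k < n by omega, show n ≠ k + 1 by omega, show ¬ k + 1 < n by omega]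
    · subst h1
      simp [subst, show n ≠ k + 1 by omega, show ¬ k + 1 < n by omega]
    · rcases lt_trichotomy n (k + 1) with h2 | h2 | h2
      · simp [subst, show n ≠ j by omega, h1, show n - 1 ≠ k by omega,
          show ¬ k < n - 1 by omega, show n ≠ k + 1 by omega, show ¬ k + 1 < n by omega]
      · subst h2
        simp [subst, show k + 1 ≠ j by omega, h1, subst_lift]
      · simp [subst, show n ≠ j by omega, h1, show n - 1 ≠ k by omega,
          show k < n - 1 by omega, show n ≠ k + 1 by omega, h2,
          show n - 1 ≠ j by omega, show j < n - 1 by omega]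
  | app A B ihA ihB => intro j k N P h; simp [subst, ihA N P h, ihB N P h]
  | lam A ih =>
    intro j k N P h
    simp [subst, ih _ _ (Nat.succ_le_succ h), lift_lift P (Nat.zero_le j),
      lift_subst_of_le N P (Nat.zero_le k)]

/-! ### Weak head reduction -/

/-- Weak head reduction: contract the redex at the head of the application spine, never going
under an abstraction or into an argument. -/
inductive WHead : Lam → Lam → Prop
  | beta (M N : Lam) : WHead (app (lam M) N) (subst M 0 N)
  | appL {M M' : Lam} (N : Lam) : WHead M M' → WHead (app M N) (app M' N)

/-- Reflexive–transitive closure of weak head reduction. -/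
def WHeads : Lam → Lam → Prop := Relation.ReflTransGen WHead

theorem WHead.step {M N : Lam} (h : WHead M N) : Step M N := by
  induction h with
  | beta M N => exact .beta M N
  | appL N _ ih => exact .appL N ih

theorem WHead.deterministic {M N P : Lam} (h : WHead M N) (h' : WHead M P) : N = P := by
  induction h generalizing P with
  | beta M N =>
    cases h' with
    | beta => rfl
    | appL _ h => cases h
  | appL N h ih =>
    cases h' with
    | beta => cases h
    | appL _ h' => rw [ih h']

theorem WHead.lift {M N : Lam} (h : WHead M N) (d : ℕ) : WHead (lift d M) (lift d N) := by
  induction h with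
  | beta M N => rw [lift_subst_of_ge M N (Nat.zero_le d)]; exact .beta _ _
  | appL N _ ih => exact .appL _ ih

theorem WHead.subst {M N : Lam} (h : WHead M N) (k : ℕ) (P : Lam) :
    WHead (subst M k P) (subst N k P) := by
  induction h with
  | beta M N => rw [subst_subst M N P (Nat.zero_le k)]; exact .beta _ _
  | appL N _ ih => exact .appL _ ih

namespace WHeads

theorem refl (M : Lam) : WHeads M M := Relation.ReflTransGen.refl

theorem trans {M N P : Lam} (h : WHeads M N) (h' : WHeads N P) : WHeads M P :=
  Relation.ReflTransGen.trans h h'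

theorem single {M N : Lam} (h : WHead M N) : WHeads M N := Relation.ReflTransGen.single h

theorem lift {M N : Lam} (h : WHeads M N) (d : ℕ) : WHeads (lift d M) (lift d N) :=
  Relation.ReflTransGen.lift (Lam.lift d) (fun _ _ (h : WHead _ _) => h.lift d) _ _ h

theorem subst {M N : Lam} (h : WHeads M N) (k : ℕ) (P : Lam) :
    WHeads (subst M k P) (subst N k P) :=
  Relation.ReflTransGen.lift (fun M => Lam.subst M k P) (fun _ _ (h : WHead _ _) => h.subst k P) _ _ h

theorem appL {M N : Lam} (h : WHeads M N) (P : Lam) : WHeads (app M P) (app N P) :=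
  Relation.ReflTransGen.lift (fun M => app M P) (fun _ _ (h : WHead _ _) => WHead.appL P h) _ _ h

theorem beta (M N : Lam) : WHeads (app (lam M) N) (Lam.subst M 0 N) := single (.beta M N)

theorem star {M N : Lam} (h : WHeads M N) : Star M N :=
  Relation.ReflTransGen.mono (fun _ _ (h : WHead _ _) => h.step) _ _ h

end WHeads

/-! ### Standardization -/

/-- Standard reduction: `M` is brought by weak head reduction to a term with the outermost
constructor of the target, whose immediate subterms then reduce in the same manner. -/
inductive Std : Lam → Lam → Prop
  | var {M : Lam} {n : ℕ} : WHeads M (var n) → Std M (var n)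
  | app {M A B A' B' : Lam} : WHeads M (app A B) → Std A A' → Std B B' → Std M (app A' B')
  | lam {M A A' : Lam} : WHeads M (lam A) → Std A A' → Std M (lam A')

namespace Std

theorem refl (M : Lam) : Std M M := by
  induction M with
  | var n => exact .var (.refl _)
  | app A B ihA ihB => exact .app (.refl _) ihA ihB
  | lam A ih => exact .lam (.refl _) ih

theorem of_wheads {M M' N : Lam} (h : WHeads M M') (h' : Std M' N) : Std M N := by
  cases h' with
  | var h1 => exact .var (h.trans h1)
  | app h1 h2 h3 => exact .app (h.trans h1) h2 h3
  | lam h1 h2 => exact .lam (h.trans h1) h2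

theorem lift {M N : Lam} (h : Std M N) (d : ℕ) : Std (lift d M) (lift d N) := by
  induction h generalizing d with
  | var h => exact of_wheads (h.lift d) (refl _)
  | app h _ _ ih1 ih2 => exact .app (h.lift d) (ih1 d) (ih2 d)
  | lam h _ ih => exact .lam (h.lift d) (ih (d + 1))

theorem subst {M M' N N' : Lam} (h : Std M M') (k : ℕ) (h' : Std N N') :
    Std (subst M k N) (subst M' k N') := by
  induction h generalizing k N N' with
  | var h =>
    refine of_wheads (h.subst k N) ?_
    simp only [Lam.subst]
    split_ifs
    exacts [h', refl _, refl _]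
  | app h _ _ ih1 ih2 => exact .app (h.subst k N) (ih1 k h') (ih2 k h')
  | lam h _ ih => exact .lam (h.subst k N) (ih (k + 1) (h'.lift 0))

/-- A standard reduction absorbs a further β-step at its end. -/
theorem step {M N N' : Lam} (h : Std M N) (h' : Step N N') : Std M N' := by
  induction h' generalizing M with
  | beta P Q =>
    cases h with
    | app h1 h2 h3 =>
      cases h2 with
      | lam h4 h5 =>
        exact of_wheads ((h1.trans (h4.appL _)).trans (.beta _ _)) (h5.subst 0 h3)
  | appL Q _ ih =>
    cases h with
    | app h1 h2 h3 => exact .app h1 (ih h2) h3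
  | appR Q _ ih =>
    cases h with
    | app h1 h2 h3 => exact .app h1 h2 (ih h3)
  | abs _ ih =>
    cases h with
    | lam h1 h2 => exact .lam h1 (ih h2)

end Std

/-- Every β-reduction sequence can be standardized. -/
theorem Star.std {M N : Lam} (h : Star M N) : Std M N := by
  induction h with
  | refl => exact .refl _
  | tail _ h ih => exact ih.step h

/-- A weak head normal form: no weak head step applies. -/
def WHNF (M : Lam) : Prop := ∀ N, ¬ WHead M N

/-- Weak head reduction terminates on a term that has a normal form. The last conjunct, that the
weak head normal form can be an abstraction only if the normal form is one, is what carries the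
induction through applications. -/
theorem Std.exists_whnf {M N : Lam} (h : Std M N) (hN : IsNormal N) :
    ∃ P, WHeads M P ∧ WHNF P ∧ ∀ Q, P = Lam.lam Q → ∃ Q', N = Lam.lam Q' := by
  induction h with
  | var h => exact ⟨_, h, (fun _ h => by cases h), (fun _ h => by cases h)⟩
  | lam h _ _ => exact ⟨_, h, (fun _ h => by cases h), fun _ _ => ⟨_, rfl⟩⟩
  | @app M A B A' B' h _ _ ih _ =>
    have hl : ∀ Q, A' ≠ Lam.lam Q := by
      rintro Q rfl
      simp [IsNormal, hasRedex] at hN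
    have hA : IsNormal A' := by
      cases A' with
      | var n => rfl
      | lam Q => exact absurd rfl (hl Q)
      | app C D => simp only [IsNormal, hasRedex, Bool.or_eq_false_iff] at hN ⊢; exact hN.1
    obtain ⟨P, hP, hw, hlam⟩ := ih hA
    have hP' : ∀ Q, P ≠ Lam.lam Q := fun Q hQ => by
      obtain ⟨Q', hQ'⟩ := hlam Q hQ
      exact hl Q' hQ'
    refine ⟨.app P B, h.trans (hP.appL B), fun R hR => ?_, fun Q hQ => by cases hQ⟩
    cases hR with
    | beta C D => exact hP' C rfl
    | appL _ hR => exact hw _ hR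

theorem Star.exists_whnf {M N : Lam} (h : Star M N) (hN : IsNormal N) :
    ∃ P, WHeads M P ∧ WHNF P :=
  let ⟨P, h1, h2, _⟩ := h.std.exists_whnf hN
  ⟨P, h1, h2⟩

/-- A term that β-reduces to `Ktrue` selects its first argument by weak head reduction alone. -/
theorem Star.select_true {T : Lam} (h : Star T Ktrue) (A B : Lam) :
    WHeads (app (app T A) B) A := by
  cases h.std with
  | lam h1 h2 =>
    cases h2 with
    | lam h3 h4 =>
      cases h4 with
      | var h5 =>
        refine (((h1.appL A).trans (.beta _ _)).appL B).trans ?_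
        refine ((h3.subst 0 A).appL B).trans ?_
        refine (WHeads.beta _ _).trans ?_
        have := (h5.subst 1 (Lam.lift 0 A)).subst 0 B
        simpa [Lam.subst, subst_lift] using this

/-- If weak head reduction from `M` leads through all the terms `s 0, s 1, …`, with at least one
step between consecutive ones, then it never stops. -/
theorem no_whnf_of_progress {s : ℕ → Lam} (hs : ∀ n, Relation.TransGen WHead (s n) (s (n + 1)))
    {M : Lam} (hM : WHeads M (s 0)) : ¬ ∃ P, WHeads M P ∧ WHNF P := by
  -- By determinism, a term lying on a weak head reduction that ends in `P` itself reaches `P`.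
  have unique : ∀ {A B P : Lam}, WHeads A B → WHeads A P → WHNF P → WHeads B P := by
    intro A B P hAB hAP hP
    rcases Relation.ReflTransGen.total_of_right_unique (r := WHead)
      (fun _ _ _ (h : WHead _ _) (h' : WHead _ _) => h.deterministic h') hAB hAP with h | h
    · exact h
    · rcases Relation.ReflTransGen.cases_head h with rfl | ⟨_, h, _⟩
      · exact .refl _
      · exact absurd h (hP _)
  rintro ⟨P, hMP, hP⟩
  -- Hence no infinite weak head reduction starts from a term that reaches `P`.
  have acc : ∀ A, WHeads A P → Acc (fun X Y => WHead Y X) A := by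
    intro A hA
    induction hA using Relation.ReflTransGen.head_induction_on with
    | refl => exact ⟨_, fun y hy => absurd hy (hP y)⟩
    | head h _ ih => exact ⟨_, fun y hy => WHead.deterministic h hy ▸ ih⟩
  have key : ∀ A, Acc (Relation.TransGen fun X Y => WHead Y X) A → ∀ n, A ≠ s n := by
    intro A hA
    induction hA with
    | intro A _ ih =>
      rintro n rfl
      exact ih _ (Relation.transGen_swap.2 (hs n)) (n + 1) rfl
  exact key _ (acc _ (unique hM hMP hP)).transGen 0 rfl

/-! ### Closed terms, pairs and projections -/

namespace Star

theorem refl (M : Lam) : Star M M := Relation.ReflTransGen.refl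

theorem trans {M N P : Lam} (h : Star M N) (h' : Star N P) : Star M P :=
  Relation.ReflTransGen.trans h h'

theorem app {M M' N N' : Lam} (h : Star M M') (h' : Star N N') :
    Star (app M N) (app M' N') :=
  trans (Relation.ReflTransGen.lift (fun M => Lam.app M N)
      (fun _ _ (h : Step _ _) => Step.appL N h) _ _ h)
    (Relation.ReflTransGen.lift (fun N => Lam.app M' N)
      (fun _ _ (h : Step _ _) => Step.appR M' h) _ _ h')

theorem appL {M M' : Lam} (h : Star M M') (N : Lam) : Star (Lam.app M N) (Lam.app M' N) :=
  h.app (refl N)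

theorem lam {M M' : Lam} (h : Star M M') : Star (lam M) (lam M') :=
  Relation.ReflTransGen.lift Lam.lam (fun _ _ (h : Step _ _) => Step.abs h) _ _ h

end Star

theorem Step.lift {M N : Lam} (h : Step M N) (d : ℕ) : Step (lift d M) (lift d N) := by
  induction h generalizing d with
  | beta M N => rw [lift_subst_of_ge M N (Nat.zero_le d)]; exact .beta _ _
  | appL N _ ih => exact .appL _ (ih d)
  | appR N _ ih => exact .appR _ (ih d)
  | abs _ ih => exact .abs (ih (d + 1))

theorem Star.lift {M N : Lam} (h : Star M N) (d : ℕ) : Star (lift d M) (lift d N) :=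
  Relation.ReflTransGen.lift (Lam.lift d) (fun _ _ (h : Step _ _) => h.lift d) _ _ h

/-- A closed term, characterized by its invariance under every lifting and substitution. -/
structure Closed (M : Lam) : Prop where
  lift : ∀ d, lift d M = M
  subst : ∀ k N, subst M k N = M

/-- The pair `λz. z a b`, the shape shared by numerals and encoded lists. -/
def pair (a b : Lam) : Lam := lam (app (app (var 0) (lift 0 a)) (lift 0 b))

theorem lift_pair (a b : Lam) (d : ℕ) : lift d (pair a b) = pair (lift d a) (lift d b) := by
  simp [pair, lift, lift_lift _ (Nat.zero_le d)]

theorem subst_pair (a b : Lam) (k : ℕ) (N : Lam) :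
    subst (pair a b) k N = pair (subst a k N) (subst b k N) := by
  simp [pair, subst, lift_subst_of_le _ _ (Nat.zero_le k)]

theorem closed_Ktrue : Closed Ktrue := by constructor <;> simp [Ktrue, lift, subst]

theorem closed_Kfalse : Closed Kfalse := by constructor <;> simp [Kfalse, lift, subst]

theorem Closed.app {M N : Lam} (hM : Closed M) (hN : Closed N) : Closed (app M N) := by
  constructor <;> simp [Lam.lift, Lam.subst, hM.lift, hM.subst, hN.lift, hN.subst]

theorem Closed.pair {M N : Lam} (hM : Closed M) (hN : Closed N) : Closed (pair M N) := by
  constructor <;> simp [lift_pair, subst_pair, hM.lift, hM.subst, hN.lift, hN.subst]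

theorem Star.pair {a a' b b' : Lam} (ha : Star a a') (hb : Star b b') :
    Star (pair a b) (pair a' b') :=
  (((Star.refl _).app (ha.lift 0)).app (hb.lift 0)).lam

theorem pair_app (a b c : Lam) : WHeads (app (pair a b) c) (app (app c a) b) := by
  simpa [pair, subst, subst_lift] using WHeads.beta (app (app (var 0) (lift 0 a)) (lift 0 b)) c

theorem Ktrue_app (a b : Lam) : WHeads (app (app Ktrue a) b) a :=
  (Star.refl Ktrue).select_true a b

theorem Kfalse_app (a b : Lam) : WHeads (app (app Kfalse a) b) b := by
  have h := (WHeads.beta (lam (var 0)) a).appL b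
  have h' := WHeads.beta (var 0) b
  simp only [subst] at h h'
  exact h.trans h'

theorem pair_Ktrue (a b : Lam) : WHeads (app (pair a b) Ktrue) a :=
  (pair_app a b _).trans (Ktrue_app a b)

theorem pair_Kfalse (a b : Lam) : WHeads (app (pair a b) Kfalse) b :=
  (pair_app a b _).trans (Kfalse_app a b)

theorem closed_num (n : ℕ) : Closed (num n) := by
  induction n with
  | zero => constructor <;> simp [num, Ktrue, Kfalse, lift, subst]
  | succ n ih => constructor <;> simp [num, Kfalse, lift, subst, ih.lift, ih.subst]

theorem num_zero_Ktrue : WHeads (app (num 0) Ktrue) Ktrue := pair_Ktrue Ktrue Kfalse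

theorem num_succ (n : ℕ) : num (n + 1) = pair Kfalse (num n) := by
  simp [num, pair, closed_Kfalse.lift, (closed_num n).lift]

theorem isNormal_num (n : ℕ) : IsNormal (num n) := by
  induction n with
  | zero => rfl
  | succ n ih => simpa [IsNormal, num, hasRedex, Kfalse] using! ih

/-- The list `[n₁, …, nₖ]` encoded as the nested pair `⟨n₁, ⟨n₂, … ⟨nₖ, Ktrue⟩⟩⟩`. -/
def enc : List ℕ → Lam
  | [] => Ktrue
  | n :: l => pair (num n) (enc l)

theorem closed_enc (l : List ℕ) : Closed (enc l) := by
  induction l with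
  | nil => exact closed_Ktrue
  | cons n l ih => exact (closed_num n).pair ih

/-! ### Primitive recursive functions -/

/-- A total function on vectors is represented by a closed term when that term, applied to the
encoded list of arguments, reduces to the numeral of the value. -/
def Represented {n : ℕ} (f : List.Vector ℕ n → ℕ) : Prop :=
  ∃ F, Closed F ∧ ∀ v, Star (app F (enc v.toList)) (num (f v))

theorem represented_zero {n : ℕ} : Represented fun _ : List.Vector ℕ n => 0 := by
  refine ⟨lam (num 0), ?_, fun v => ?_⟩
  · constructor <;> simp [lift, subst, (closed_num 0).lift, (closed_num 0).subst]
  · simpa [(closed_num 0).subst] using (WHeads.beta (num 0) (enc v.toList)).star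

theorem represented_succ : Represented fun v : List.Vector ℕ 1 => v.head.succ := by
  refine ⟨lam (pair Kfalse (app (var 0) Ktrue)), ?_, fun v => ?_⟩
  · constructor <;> simp [lift, subst, lift_pair, subst_pair, closed_Kfalse.lift,
      closed_Kfalse.subst, closed_Ktrue.lift, closed_Ktrue.subst]
  · refine (WHeads.beta _ _).star.trans ?_
    obtain ⟨n, v, rfl⟩ := v.exists_eq_cons
    simp only [subst_pair, closed_Kfalse.subst, subst, closed_Ktrue.subst, if_true,
      List.Vector.head_cons, List.Vector.toList_cons, Nat.succ_eq_add_one, num_succ, enc]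
    exact (Star.refl _).pair (pair_Ktrue _ _).star

theorem represented_get {n : ℕ} (i : Fin n) : Represented fun v : List.Vector ℕ n => v.get i := by
  induction n with
  | zero => exact i.elim0
  | succ n ih =>
    refine Fin.cases ?_ (fun i => ?_) i
    · refine ⟨lam (app (var 0) Ktrue), ?_, fun v => ?_⟩
      · constructor <;> simp [lift, subst, closed_Ktrue.lift, closed_Ktrue.subst]
      · refine (WHeads.beta _ _).star.trans ?_
        obtain ⟨n, v, rfl⟩ := v.exists_eq_cons
        simp only [subst, closed_Ktrue.subst, if_true, List.Vector.toList_cons, enc,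
          List.Vector.get_zero, List.Vector.head_cons]
        exact (pair_Ktrue _ _).star
    · obtain ⟨F, hF, h⟩ := ih i
      refine ⟨lam (app F (app (var 0) Kfalse)), ?_, fun v => ?_⟩
      · constructor <;> simp [lift, subst, closed_Kfalse.lift, closed_Kfalse.subst, hF.lift,
          hF.subst]
      · refine (WHeads.beta _ _).star.trans ?_
        obtain ⟨n, v, rfl⟩ := v.exists_eq_cons
        simp only [subst, closed_Kfalse.subst, hF.subst, if_true, List.Vector.toList_cons, enc,
          List.Vector.get_cons_succ]
        exact ((Star.refl _).app (pair_Kfalse _ _).star).trans (h v)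

/-- Finitely many represented functions of the same arguments are computed jointly, as an encoded
list. -/
theorem represented_tuple {m n : ℕ} (g : Fin n → List.Vector ℕ m → ℕ)
    (hg : ∀ i, Represented (g i)) :
    ∃ T, Closed T ∧
      ∀ v, Star (app T (enc v.toList)) (enc (List.Vector.ofFn fun i => g i v).toList) := by
  induction n with
  | zero =>
    refine ⟨lam Ktrue, ?_, fun v => ?_⟩
    · constructor <;> simp [lift, subst, closed_Ktrue.lift, closed_Ktrue.subst]
    · exact (WHeads.beta Ktrue _).star
  | succ n ih =>
    obtain ⟨T, hT, h⟩ := ih (fun i => g i.succ) fun i => hg i.succ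
    obtain ⟨F, hF, h'⟩ := hg 0
    refine ⟨lam (pair (app F (var 0)) (app T (var 0))), ?_, fun v => ?_⟩
    · constructor <;> simp [lift, subst, lift_pair, subst_pair, hF.lift, hF.subst, hT.lift,
        hT.subst]
    · refine (WHeads.beta _ _).star.trans ?_
      simp only [subst, subst_pair, hF.subst, hT.subst, if_true]
      exact (h' v).pair (h v)

theorem Represented.comp {m n : ℕ} {f : List.Vector ℕ n → ℕ} (g : Fin n → List.Vector ℕ m → ℕ)
    (hf : Represented f) (hg : ∀ i, Represented (g i)) :
    Represented fun v => f (List.Vector.ofFn fun i => g i v) := by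
  obtain ⟨F, hF, h⟩ := hf
  obtain ⟨T, hT, h'⟩ := represented_tuple g hg
  refine ⟨lam (app F (app T (var 0))), ?_, fun v => ?_⟩
  · constructor <;> simp [lift, subst, hF.lift, hF.subst, hT.lift, hT.subst]
  · refine (WHeads.beta _ _).star.trans ?_
    simp only [subst, hF.subst, hT.subst, if_true]
    exact ((Star.refl F).app (h' v)).trans (h _)

/-- The body of primitive recursion, to be applied to itself, the recursion variable `n` and the
encoded parameters `p`:
`λw n p. n Ktrue (F p) (G ⟨n Kfalse, ⟨w w (n Kfalse) p, p⟩⟩)`. -/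
def recBody (F G : Lam) : Lam :=
  lam (lam (lam (app (app (app (var 1) Ktrue) (app F (var 0)))
    (app G (pair (app (var 1) Kfalse)
      (pair (app (app (app (var 2) (var 2)) (app (var 1) Kfalse)) (var 0)) (var 0)))))))

theorem closed_recBody {F G : Lam} (hF : Closed F) (hG : Closed G) : Closed (recBody F G) := by
  constructor <;> simp [recBody, lift, subst, lift_pair, subst_pair, hF.lift, hF.subst, hG.lift,
    hG.subst, closed_Ktrue.lift, closed_Ktrue.subst, closed_Kfalse.lift, closed_Kfalse.subst]

theorem recBody_app {F G W N P : Lam} (hF : Closed F) (hG : Closed G) (hW : Closed W)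
    (hN : Closed N) :
    WHeads (app (app (app (recBody F G) W) N) P)
      (app (app (app N Ktrue) (app F P))
        (app G (pair (app N Kfalse) (pair (app (app (app W W) (app N Kfalse)) P) P)))) := by
  refine (((WHeads.beta _ _).appL N).appL P).trans ?_
  refine ((WHeads.beta _ _).appL P).trans ?_
  refine (WHeads.beta _ _).trans ?_
  simp [subst, subst_pair, hF.subst, hG.subst, hW.lift, hW.subst, hN.lift,
    hN.subst, closed_Ktrue.subst, closed_Kfalse.subst, WHeads.refl]

theorem Represented.prec {n : ℕ} {f : List.Vector ℕ n → ℕ} {g : List.Vector ℕ (n + 2) → ℕ}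
    (hf : Represented f) (hg : Represented g) :
    Represented fun v : List.Vector ℕ (n + 1) =>
      v.head.rec (f v.tail) fun y IH => g (y ::ᵥ IH ::ᵥ v.tail) := by
  obtain ⟨F, hF, h⟩ := hf
  obtain ⟨G, hG, h'⟩ := hg
  have hW := closed_recBody hF hG
  refine ⟨lam (app (app (app (recBody F G) (recBody F G)) (app (var 0) Ktrue))
    (app (var 0) Kfalse)), ?_, fun v => ?_⟩
  · constructor <;> simp [lift, subst, hW.lift, hW.subst, closed_Ktrue.lift, closed_Ktrue.subst,
      closed_Kfalse.lift, closed_Kfalse.subst]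
  · refine (WHeads.beta _ _).star.trans ?_
    obtain ⟨k, v, rfl⟩ := v.exists_eq_cons
    simp only [subst, closed_Kfalse.subst, closed_Ktrue.subst, hW.subst, if_true,
      List.Vector.toList_cons, enc, List.Vector.head_cons, List.Vector.tail_cons]
    refine (((Star.refl _).app (pair_Ktrue _ _).star).app (pair_Kfalse _ _).star).trans ?_
    induction k with
    | zero =>
      refine (recBody_app hF hG hW (closed_num 0)).star.trans ?_
      refine ((num_zero_Ktrue.appL _).appL _).star.trans ?_
      exact (Ktrue_app _ _).star.trans (h v)
    | succ k ih =>
      refine (recBody_app hF hG hW (closed_num (k + 1))).star.trans ?_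
      have hp : Star (app (num (k + 1)) Kfalse) (num k) := by
        rw [num_succ]; exact (pair_Kfalse _ _).star
      have ht : Star (app (num (k + 1)) Ktrue) Kfalse := by
        rw [num_succ]; exact (pair_Ktrue _ _).star
      refine ((ht.appL _).appL _).trans ((Kfalse_app _ _).star.trans ?_)
      have hr := (((Star.refl (app (recBody F G) (recBody F G))).app hp).appL
        (enc v.toList)).trans ih
      refine ((Star.refl G).app (hp.pair (hr.pair (Star.refl _)))).trans ?_
      have := h' (k ::ᵥ (k.rec (f v) fun y IH => g (y ::ᵥ IH ::ᵥ v)) ::ᵥ v)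
      simpa only [List.Vector.toList_cons, enc] using this

theorem represented_of_primrec' {n : ℕ} {f : List.Vector ℕ n → ℕ} (hf : Nat.Primrec' f) :
    Represented f := by
  induction hf with
  | zero => exact represented_zero
  | succ => exact represented_succ
  | get i => exact represented_get i
  | comp g _ _ ihf ihg => exact ihf.comp g ihg
  | prec _ _ ihf ihg => exact ihf.prec ihg

/-! ### Unbounded search -/

/-- The body of the search loop, to be applied to itself, the search variable `n` and the encoded
parameters `p`: `λw n p. H ⟨n, p⟩ Ktrue (w w ⟨Kfalse, n⟩ p) (H ⟨n, p⟩ Kfalse)`.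
When `H ⟨n, p⟩` is `0` the search goes on with `n + 1`, and when it is `m + 1` the result
is `m`. -/
def searchBody (H : Lam) : Lam :=
  lam (lam (lam (app (app (app (app H (pair (var 1) (var 0))) Ktrue)
      (app (app (app (var 2) (var 2)) (pair Kfalse (var 1))) (var 0)))
    (app (app H (pair (var 1) (var 0))) Kfalse))))

/-- The search loop at stage `n`. -/
def search (H : Lam) (n : ℕ) (p : Lam) : Lam :=
  app (app (app (searchBody H) (searchBody H)) (num n)) p

theorem closed_searchBody {H : Lam} (hH : Closed H) : Closed (searchBody H) := by
  constructor <;> simp [searchBody, lift, subst, lift_pair, subst_pair, hH.lift, hH.subst,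
    closed_Ktrue.lift, closed_Ktrue.subst, closed_Kfalse.lift, closed_Kfalse.subst]

theorem search_unfold {H : Lam} (hH : Closed H) (n : ℕ) (p : Lam) :
    Relation.TransGen WHead (search H n p)
      (app (app (app (app H (pair (num n) p)) Ktrue) (search H (n + 1) p))
        (app (app H (pair (num n) p)) Kfalse)) := by
  have hW := closed_searchBody hH
  have hn := closed_num n
  refine Relation.TransGen.head' (.appL _ (.appL _ (.beta _ _))) ?_
  refine ((WHeads.beta _ _).appL p).trans ?_
  refine (WHeads.beta _ _).trans ?_
  simp [search, num_succ, subst, subst_pair, hH.subst, hW.lift, hW.subst, hn.lift,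
    hn.subst, closed_Ktrue.subst, closed_Kfalse.subst, WHeads.refl]

/-- A failed test sends the search to the next stage by weak head steps. -/
theorem search_next {H p : Lam} {n : ℕ} (hH : Closed H)
    (h : Star (app H (pair (num n) p)) (num 0)) :
    Relation.TransGen WHead (search H n p) (search H (n + 1) p) :=
  (search_unfold hH n p).trans_left
    (((h.appL Ktrue).trans num_zero_Ktrue.star).select_true _ _)

theorem search_stop {H p : Lam} {n m : ℕ} (hH : Closed H)
    (h : Star (app H (pair (num n) p)) (num (m + 1))) : Star (search H n p) (num m) := by
  rw [num_succ] at h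
  refine WHeads.star (search_unfold hH n p).to_reflTransGen |>.trans ?_
  refine ((((h.appL _).trans (pair_Ktrue _ _).star).appL _).appL _).trans ?_
  exact (Kfalse_app _ _).star.trans ((h.appL _).trans (pair_Kfalse _ _).star)

/-! ### Currying -/

/-- `curryN k G` takes `k` arguments one after the other and applies `G` to their encoded list. -/
def curryN : ℕ → Lam
  | 0 => lam (app (var 0) Ktrue)
  | k + 1 => lam (lam (app (curryN k) (lam (app (var 2) (pair (var 1) (var 0))))))

theorem closed_curryN (k : ℕ) : Closed (curryN k) := by
  induction k with
  | zero => constructor <;> simp [curryN, lift, subst, closed_Ktrue.lift, closed_Ktrue.subst]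
  | succ k ih =>
    constructor <;> simp [curryN, lift, subst, lift_pair, subst_pair, ih.lift, ih.subst]

theorem WHeads.apps {M N : Lam} (h : WHeads M N) (l : List Lam) :
    WHeads (apps M l) (apps N l) := by
  induction l generalizing M N with
  | nil => exact h
  | cons a l ih => exact ih (h.appL a)

theorem curryN_apps {G : Lam} (hG : Closed G) (l : List ℕ) :
    WHeads (apps (app (curryN l.length) G) (l.map num)) (app G (enc l)) := by
  induction l generalizing G with
  | nil =>
    simpa [subst, closed_Ktrue.subst] using! WHeads.beta (app (var 0) Ktrue) G
  | cons n l ih =>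
    have hn := closed_num n
    have hc := closed_curryN l.length
    have hG' : Closed (lam (app G (pair (num n) (var 0)))) := by
      constructor <;> simp [lift, subst, lift_pair, subst_pair, hG.lift, hG.subst, hn.lift,
        hn.subst]
    have h1 : WHeads (app (app (curryN (l.length + 1)) G) (num n))
        (app (curryN l.length) (lam (app G (pair (num n) (var 0))))) := by
      refine ((WHeads.beta _ _).appL _).trans ((WHeads.beta _ _).trans ?_)
      simp [subst, subst_pair, hc.subst, hG.lift, hG.subst, hn.lift, WHeads.refl]
    refine (h1.apps (l.map num)).trans ((ih hG').trans ((WHeads.beta _ _).trans ?_))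
    simp [subst, subst_pair, hG.subst, hn.subst, enc, WHeads.refl]

/-! ### Kleene's normal form and the representation theorem -/

/-- Kleene's normal form: a partial computable function is the outcome of an unbounded search
through a primitive recursive `h`, where `h (n, v) = 0` means that stage `n` of the search has
failed and `h (n, v) = m + 1` that it has found the value `m`. -/
theorem exists_normal_form {k : ℕ} {f : (Fin k → ℕ) →. ℕ} (hf : Partrec f) :
    ∃ h : List.Vector ℕ (k + 1) → ℕ, Nat.Primrec' h ∧
      ∀ v : Fin k → ℕ, ∀ m, m ∈ f v ↔ ∃ n, h (n ::ᵥ List.Vector.ofFn v) = m + 1 := by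
  obtain ⟨c, hc⟩ := Nat.Partrec.Code.exists_code.1 hf
  -- `Partrec` codes `Fin k → ℕ` through its `Primcodable` instance, which is not the `Encodable`
  -- instance found by default.
  obtain ⟨e, he, hdec⟩ : ∃ e : (Fin k → ℕ) → ℕ, Primrec e ∧
      ∀ v, Primcodable.toEncodable.decode (e v) = some v :=
    ⟨fun v => Primcodable.toEncodable.encode v, Primrec.encode,
      fun v => Primcodable.toEncodable.encodek v⟩
  refine ⟨fun w => Encodable.encode (Nat.Partrec.Code.evaln w.head c (e w.tail.get)), ?_,
    fun v m => ?_⟩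
  · refine Nat.Primrec'.of_prim (Primrec.encode.comp ?_)
    exact Nat.Partrec.Code.primrec_evaln.comp
      ((Primrec.vector_head.pair (Primrec.const c)).pair
        (he.comp (Primrec.vector_get'.comp Primrec.vector_tail)))
  · have h1 : m ∈ f v ↔ m ∈ c.eval (e v) := by
      simp [hc, hdec]
    rw [h1, Nat.Partrec.Code.evaln_complete]
    refine exists_congr fun n => ?_
    have h2 : (List.Vector.ofFn v).get = v := funext fun i => List.Vector.get_ofFn v i
    simp only [List.Vector.head_cons, List.Vector.tail_cons, h2, Option.mem_def]
    cases Nat.Partrec.Code.evaln n c (e v) <;> simp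

theorem kleene_lambda_representation (k : ℕ) (hk : 1 ≤ k)
    (f : (Fin k → ℕ) →. ℕ) (hf : Partrec f) :
    ∃ M : Lam, ∀ v : Fin k → ℕ,
      ((∃ N, IsNormal N ∧ Star (apps M (List.ofFn fun i => num (v i))) N) ↔ (f v).Dom) ∧
      ∀ m ∈ f v, Star (apps M (List.ofFn fun i => num (v i))) (num m) := by
  obtain ⟨h, hprim, hspec⟩ := exists_normal_form hf
  obtain ⟨H, hH, hrep⟩ := represented_of_primrec' hprim
  have hW := closed_searchBody hH
  have hG : Closed (lam (app (app (app (searchBody H) (searchBody H)) (num 0)) (var 0))) := by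
    constructor <;> simp [lift, subst, hW.lift, hW.subst, (closed_num 0).lift,
      (closed_num 0).subst]
  refine ⟨app (curryN k) (lam (app (app (app (searchBody H) (searchBody H)) (num 0)) (var 0))),
    fun v => ?_⟩
  have hstart : WHeads (apps (app (curryN k)
      (lam (app (app (app (searchBody H) (searchBody H)) (num 0)) (var 0))))
      (List.ofFn fun i => num (v i))) (search H 0 (enc (List.ofFn v))) := by
    have h1 := curryN_apps hG (List.ofFn v)
    rw [List.length_ofFn, List.map_ofFn] at h1
    refine h1.trans ((WHeads.beta _ _).trans ?_)
    simp [subst, hW.subst, (closed_num 0).subst, search, WHeads.refl]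
  have htest : ∀ n, Star (app H (pair (num n) (enc (List.ofFn v))))
      (num (h (n ::ᵥ List.Vector.ofFn v))) := fun n => by
    simpa [enc] using hrep (n ::ᵥ List.Vector.ofFn v)
  have hval : ∀ m ∈ f v, Star (search H 0 (enc (List.ofFn v))) (num m) := by
    intro m hm
    -- The search stops at the first `n` with `h (n, v) ≠ 0`; every successful stage yields `m`.
    have hex : ∃ n, h (n ::ᵥ List.Vector.ofFn v) ≠ 0 := by
      obtain ⟨n, hn⟩ := (hspec v m).1 hm
      exact ⟨n, by omega⟩
    have hfirst : h (Nat.find hex ::ᵥ List.Vector.ofFn v) = m + 1 := by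
      obtain ⟨m', hm'⟩ := Nat.exists_eq_succ_of_ne_zero (Nat.find_spec hex)
      rw [hm', Part.mem_unique ((hspec v m').2 ⟨_, hm'⟩) hm]
    have hreach : ∀ n ≤ Nat.find hex,
        Star (search H 0 (enc (List.ofFn v))) (search H n (enc (List.ofFn v))) := by
      intro n
      induction n with
      | zero => exact fun _ => .refl _
      | succ n ih =>
        intro hn
        have h0 : h (n ::ᵥ List.Vector.ofFn v) = 0 := not_not.1 (Nat.find_min hex hn)
        have hstep := search_next hH (h0 ▸ htest n)
        exact (ih (by omega)).trans (WHeads.star hstep.to_reflTransGen)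
    exact (hreach _ le_rfl).trans (search_stop hH (hfirst ▸ htest _))
  refine ⟨⟨?_, fun hd => ?_⟩, fun m hm => hstart.star.trans (hval m hm)⟩
  · rintro ⟨N, hN, hred⟩
    by_contra hd
    have h0 : ∀ n, h (n ::ᵥ List.Vector.ofFn v) = 0 := by
      intro n
      by_contra hne
      obtain ⟨m, hm⟩ := Nat.exists_eq_succ_of_ne_zero hne
      exact hd (Part.dom_iff_mem.2 ⟨m, (hspec v m).2 ⟨n, hm⟩⟩)
    exact no_whnf_of_progress (s := fun n => search H n (enc (List.ofFn v)))
      (fun n => search_next hH (h0 n ▸ htest n)) hstart (hred.exists_whnf hN)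
  · exact ⟨_, isNormal_num _, hstart.star.trans (hval _ (Part.get_mem hd))⟩

end Lam
end

section
/- The Λ_F-calculus is confluent: writing → for the union →_β ∪ →_F and →* for its reflexive–transitive closure, if M →* N' and M →* N'' then there exists a Λ_F-term P with N' →* P and N'' →* P. -/
/-!
Confluence is proved by the Tait–Martin-Löf method. Parallel reduction `Par` contracts any set of
β-redexes of a term simultaneously and may also contract `F`-redexes at the leaves of the
derivation. It lies between `Step` and `Star`, so it suffices that `Par` has the diamond property
(`Par.diamond`).

For β against β the diamond is closed by compatibility of `Par` with substitution (`Par.subst`);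
this survives the addition of `F`-redexes because encodings are closed, hence `F`-axioms are
invariant under `lift` and `subst`. For `F` against anything, an `F`-redex `c_f ⌜a₁⌝ ⋯ ⌜a_k⌝` has
no other redex inside it: the encodings are normal, the head is a constant and not an abstraction,
and a shorter spine headed by `c_f` is not an `F`-redex since the arity of `f` is fixed. So `Par`
either leaves an `F`-redex unchanged or contracts it at its root (`FAx.par_inv`), and the contractum
is unique because encodings are injective (`FAx.unique`).
-/

/-- The two datatypes: natural numbers and Booleans. -/
inductive Dt : Type
  | nat
  | bool
  deriving DecidableEq

def Dt.carrier : Dt → Type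
  | .nat => ℕ
  | .bool => Bool

instance Dt.decEqCarrier : (D : Dt) → DecidableEq D.carrier
  | .nat => inferInstanceAs (DecidableEq ℕ)
  | .bool => inferInstanceAs (DecidableEq Bool)

/-- A family `F` of typed functions over the datatypes. -/
structure Sig where
  Sym : Type
  arity : Sym → ℕ
  dom : (f : Sym) → Fin (arity f) → Dt
  cod : Sym → Dt
  interp : (f : Sym) → ((i : Fin (arity f)) → (dom f i).carrier) → (cod f).carrier

/-- Terms of the `Λ_F`-calculus (de Bruijn representation, so α-equivalence is equality). -/
inductive LamF (S : Sig) : Type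
  | var : ℕ → LamF S
  | const : S.Sym → LamF S
  | app : LamF S → LamF S → LamF S
  | lam : LamF S → LamF S

namespace LamF

variable {S : Sig}

def lift (d : ℕ) : LamF S → LamF S
  | var n => if n < d then var n else var (n + 1)
  | const c => const c
  | app M N => app (lift d M) (lift d N)
  | lam M => lam (lift (d + 1) M)

def subst : LamF S → ℕ → LamF S → LamF S
  | var n, k, N => if n = k then N else if k < n then var (n - 1) else var n
  | const c, _, _ => const c
  | app A B, k, N => app (subst A k N) (subst B k N)
  | lam A, k, N => lam (subst A (k + 1) (lift 0 N))

def apps : LamF S → List (LamF S) → LamF S := List.foldl app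

def Ktrue : LamF S := lam (lam (var 1))
def Kfalse : LamF S := lam (lam (var 0))

def num : ℕ → LamF S
  | 0 => lam (app (app (var 0) Ktrue) Kfalse)
  | n + 1 => lam (app (app (var 0) Kfalse) (num n))

/-- Encoding of an element of a datatype as a `Λ_F`-term. -/
def enc : (D : Dt) → D.carrier → LamF S
  | .nat, n => num n
  | .bool, b => cond b Ktrue Kfalse

/-- One-step β-reduction. -/
inductive BStep : LamF S → LamF S → Prop
  | beta (M N : LamF S) : BStep (app (lam M) N) (subst M 0 N)
  | appL {M M' : LamF S} (N : LamF S) : BStep M M' → BStep (app M N) (app M' N)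
  | appR (M : LamF S) {N N' : LamF S} : BStep N N' → BStep (app M N) (app M N')
  | abs {M M' : LamF S} : BStep M M' → BStep (lam M) (lam M')

/-- The `F`-axioms: `c_f ⌜a₁⌝ ⋯ ⌜a_k⌝ → ⌜f(a₁,…,a_k)⌝` (root redexes). -/
inductive FAx : LamF S → LamF S → Prop
  | intro (f : S.Sym) (a : (i : Fin (S.arity f)) → (S.dom f i).carrier) :
      FAx (apps (const f) (List.ofFn fun i => enc (S.dom f i) (a i)))
          (enc (S.cod f) (S.interp f a))

/-- One-step `F`-reduction: contextual closure of the `F`-axioms. -/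
inductive FStep : LamF S → LamF S → Prop
  | ax {M N : LamF S} : FAx M N → FStep M N
  | appL {M M' : LamF S} (N : LamF S) : FStep M M' → FStep (app M N) (app M' N)
  | appR (M : LamF S) {N N' : LamF S} : FStep N N' → FStep (app M N) (app M N')
  | abs {M M' : LamF S} : FStep M M' → FStep (lam M) (lam M')

def BStar : LamF S → LamF S → Prop := Relation.ReflTransGen BStep
def FStar : LamF S → LamF S → Prop := Relation.ReflTransGen FStep

/-- One-step reduction of the `Λ_F`-calculus: β or F. -/
def Step (M N : LamF S) : Prop := BStep M N ∨ FStep M N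

def Star : LamF S → LamF S → Prop := Relation.ReflTransGen Step

/-- `M` is an `F`-redex. -/
def IsFRedex (M : LamF S) : Prop := ∃ N, FAx M N

/-- `M` contains an `F`-redex (equivalently: some `F`-step applies to `M`). -/
def HasF (M : LamF S) : Prop := ∃ N, FStep M N

def size : LamF S → ℕ
  | var _ => 1
  | const _ => 1
  | app A B => size A + size B + 1
  | lam A => size A + 1

end LamF

namespace LamF

variable {S : Sig}

/-! ### Commutation of lifting and substitution -/

theorem lift_lift (M : LamF S) (i j : ℕ) (h : i ≤ j) :
    lift i (lift j M) = lift (j + 1) (lift i M) := by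
  induction M generalizing i j with
  | var n => grind [lift]
  | const c => rfl
  | app A B ihA ihB => simp [lift, ihA i j h, ihB i j h]
  | lam A ih => simp [lift, ih (i + 1) (j + 1) (by omega)]

theorem lift_subst_le (M N : LamF S) (k d : ℕ) (h : k ≤ d) :
    lift d (subst M k N) = subst (lift (d + 1) M) k (lift d N) := by
  induction M generalizing k d N with
  | var n => grind [lift, subst]
  | const c => rfl
  | app A B ihA ihB => simp [lift, subst, ihA N k d h, ihB N k d h]
  | lam A ih =>
    simp [lift, subst, ih (lift 0 N) (k + 1) (d + 1) (by omega), lift_lift N 0 d (by omega)]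

theorem lift_subst_ge (M N : LamF S) (k d : ℕ) (h : d ≤ k) :
    lift d (subst M k N) = subst (lift d M) (k + 1) (lift d N) := by
  induction M generalizing k d N with
  | var n => grind [lift, subst]
  | const c => rfl
  | app A B ihA ihB => simp [lift, subst, ihA N k d h, ihB N k d h]
  | lam A ih =>
    simp [lift, subst, ih (lift 0 N) (k + 1) (d + 1) (by omega), lift_lift N 0 d (by omega)]

theorem subst_lift (M N : LamF S) (k : ℕ) : subst (lift k M) k N = M := by
  induction M generalizing k N with
  | var n => grind [lift, subst]
  | const c => rfl
  | app A B ihA ihB => simp [lift, subst, ihA, ihB]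
  | lam A ih => simp [lift, subst, ih]

theorem subst_subst (M N P : LamF S) (i k : ℕ) (h : i ≤ k) :
    subst (subst M i N) k P = subst (subst M (k + 1) (lift i P)) i (subst N k P) := by
  induction M generalizing i k N P with
  | var n =>
    have := subst_lift P (subst N k P) i
    grind [subst]
  | const c => rfl
  | app A B ihA ihB => simp [subst, ihA N P i k h, ihB N P i k h]
  | lam A ih =>
    simp [subst, ih (lift 0 N) (lift 0 P) (i + 1) (k + 1) (by omega),
      lift_lift P 0 i (by omega), lift_subst_ge N P k 0 (by omega)]

/-! ### Encodings and `F`-redexes -/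

theorem lift_num (n d : ℕ) : lift d (num n : LamF S) = num n := by
  induction n generalizing d with
  | zero => simp [num, lift, Ktrue, Kfalse]
  | succ n ih => simp [num, lift, Kfalse, ih]

theorem subst_num (n k : ℕ) (N : LamF S) : subst (num n) k N = num n := by
  induction n generalizing k N with
  | zero => simp [num, subst, Ktrue, Kfalse]
  | succ n ih => simp [num, subst, Kfalse, ih]

theorem lift_enc (D : Dt) (a : D.carrier) (d : ℕ) : lift d (enc D a : LamF S) = enc D a := by
  cases D with
  | nat => exact lift_num a d
  | bool => cases a <;> simp [enc, Ktrue, Kfalse, lift]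

theorem subst_enc (D : Dt) (a : D.carrier) (k : ℕ) (N : LamF S) :
    subst (enc D a) k N = enc D a := by
  cases D with
  | nat => exact subst_num a k N
  | bool => cases a <;> simp [enc, Ktrue, Kfalse, subst]

theorem num_injective : Function.Injective (num : ℕ → LamF S) := by
  intro m
  induction m with
  | zero => intro n h; cases n <;> simp_all [num, Ktrue, Kfalse]
  | succ m ih =>
    intro n h
    cases n with
    | zero => simp [num, Ktrue, Kfalse] at h
    | succ n =>
      simp only [num, lam.injEq, app.injEq, true_and] at h
      rw [ih h]

theorem enc_injective (D : Dt) : Function.Injective (enc D : D.carrier → LamF S) := by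
  cases D with
  | nat => exact num_injective
  | bool =>
    intro a b h
    cases a <;> cases b <;> first | rfl | simp [enc, Ktrue, Kfalse] at h

theorem apps_concat (M N : LamF S) (l : List (LamF S)) :
    apps M (l ++ [N]) = app (apps M l) N := by
  simp [apps]

theorem apps_const_ne_lam (f : S.Sym) (l : List (LamF S)) (A : LamF S) :
    apps (const f) l ≠ lam A := by
  induction l using List.reverseRecOn with
  | nil => simp [apps]
  | append_singleton l b => simp [apps_concat]

theorem apps_const_inj {f g : S.Sym} {l m : List (LamF S)}
    (h : apps (const f) l = apps (const g) m) : f = g ∧ l = m := by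
  induction l using List.reverseRecOn generalizing m with
  | nil =>
    induction m using List.reverseRecOn with
    | nil => simpa [apps] using h
    | append_singleton m b => rw [apps_concat] at h; simp [apps] at h
  | append_singleton l a ih =>
    induction m using List.reverseRecOn with
    | nil => rw [apps_concat] at h; simp [apps] at h
    | append_singleton m b =>
      simp only [apps_concat, app.injEq] at h
      obtain ⟨rfl, rfl⟩ := ih h.1
      simp [h.2]

theorem lift_apps (d : ℕ) (M : LamF S) (l : List (LamF S)) (hl : ∀ x ∈ l, lift d x = x) :
    lift d (apps M l) = apps (lift d M) l := by
  induction l using List.reverseRecOn with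
  | nil => rfl
  | append_singleton l b ih =>
    simp only [apps_concat, lift]
    rw [ih fun x hx => hl x (by simp [hx]), hl b (by simp)]

theorem subst_apps (k : ℕ) (N M : LamF S) (l : List (LamF S))
    (hl : ∀ x ∈ l, subst x k N = x) :
    subst (apps M l) k N = apps (subst M k N) l := by
  induction l using List.reverseRecOn with
  | nil => rfl
  | append_singleton l b ih =>
    simp only [apps_concat, subst]
    rw [ih fun x hx => hl x (by simp [hx]), hl b (by simp)]

theorem FAx.lift {M N : LamF S} (h : FAx M N) (d : ℕ) : FAx (lift d M) (lift d N) := by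
  obtain ⟨f, a⟩ := h
  rw [lift_enc, lift_apps]
  · exact FAx.intro f a
  · intro x hx
    obtain ⟨i, rfl⟩ := (List.mem_ofFn' _ _).1 hx
    exact lift_enc _ _ _

theorem FAx.subst {M N : LamF S} (h : FAx M N) (k : ℕ) (P Q : LamF S) :
    FAx (subst M k P) (subst N k Q) := by
  obtain ⟨f, a⟩ := h
  rw [subst_enc, subst_apps]
  · exact FAx.intro f a
  · intro x hx
    obtain ⟨i, rfl⟩ := (List.mem_ofFn' _ _).1 hx
    exact subst_enc _ _ _ _

theorem FAx.unique {M N N' : LamF S} (h : FAx M N) (h' : FAx M N') : N = N' := by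
  obtain ⟨f, a⟩ := h
  generalize hM : apps (const f) (List.ofFn fun i => enc (S.dom f i) (a i)) = M at h'
  obtain ⟨g, b⟩ := h'
  obtain ⟨rfl, hl⟩ := apps_const_inj hM
  have hab : a = b := by
    funext i
    exact enc_injective _ (congrFun (List.ofFn_injective hl) i)
  rw [hab]

/-- A spine headed by `c_f` is an `F`-redex only if it has exactly as many arguments as the
arity of `f`. -/
theorem FAx.length_eq {f : S.Sym} {l : List (LamF S)} {N : LamF S}
    (h : FAx (apps (const f) l) N) : l.length = S.arity f := by
  generalize hM : apps (const f) l = M at h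
  obtain ⟨g, b⟩ := h
  obtain ⟨rfl, rfl⟩ := apps_const_inj hM
  simp

theorem FAx.not_lam {A N : LamF S} : ¬ FAx (lam A) N := by
  intro h
  generalize hM : lam A = M at h
  obtain ⟨f, a⟩ := h
  exact apps_const_ne_lam _ _ _ hM.symm

theorem FAx.not_var {n : ℕ} {N : LamF S} : ¬ FAx (var n) N := by
  intro h
  generalize hM : (var n : LamF S) = M at h
  obtain ⟨f, a⟩ := h
  generalize (List.ofFn fun i => enc (S.dom f i) (a i)) = l at hM
  induction l using List.reverseRecOn with
  | nil => simp [apps] at hM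
  | append_singleton l b => simp [apps_concat] at hM

/-! ### Parallel reduction -/

/-- Parallel reduction: any set of β-redexes and `F`-redexes already present in the term is
contracted simultaneously. Arguments of an `F`-redex need no parallel premises, since encodings
are normal. -/
inductive Par : LamF S → LamF S → Prop
  | var (n : ℕ) : Par (var n) (var n)
  | const (c : S.Sym) : Par (const c) (const c)
  | app {A A' B B' : LamF S} : Par A A' → Par B B' → Par (app A B) (app A' B')
  | lam {A A' : LamF S} : Par A A' → Par (lam A) (lam A')
  | beta {A A' B B' : LamF S} : Par A A' → Par B B' → Par (app (lam A) B) (subst A' 0 B')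
  | ax {M N : LamF S} : FAx M N → Par M N

theorem Par.refl (M : LamF S) : Par M M := by
  induction M with
  | var n => exact .var n
  | const c => exact .const c
  | app A B ihA ihB => exact .app ihA ihB
  | lam A ih => exact .lam ih

theorem Par.lift {M M' : LamF S} (h : Par M M') (d : ℕ) : Par (lift d M) (lift d M') := by
  induction h generalizing d with
  | var n => exact .refl _
  | const c => exact .refl _
  | app _ _ ihA ihB => exact .app (ihA d) (ihB d)
  | lam _ ih => exact .lam (ih (d + 1))
  | beta _ _ ihA ihB =>
    rw [lift_subst_le _ _ 0 d (Nat.zero_le d)]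
    exact .beta (ihA (d + 1)) (ihB d)
  | ax h => exact .ax (h.lift d)

theorem Par.subst {M M' N N' : LamF S} (h : Par M M') (hN : Par N N') (k : ℕ) :
    Par (subst M k N) (subst M' k N') := by
  induction h generalizing N N' k with
  | var n =>
    simp only [LamF.subst]
    split_ifs
    · exact hN
    · exact .refl _
    · exact .refl _
  | const c => exact .refl _
  | app _ _ ihA ihB => exact .app (ihA hN k) (ihB hN k)
  | lam _ ih => exact .lam (ih (hN.lift 0) (k + 1))
  | beta _ _ ihA ihB =>
    rw [subst_subst _ _ _ 0 k (Nat.zero_le k)]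
    exact .beta (ihA (hN.lift 0) (k + 1)) (ihB hN k)
  | ax h => exact .ax (h.subst k _ _)

theorem Par.var_inv {n : ℕ} {X : LamF S} (h : Par (.var n) X) : X = .var n := by
  cases h with
  | var => rfl
  | ax h => exact absurd h FAx.not_var

theorem Par.lam_inv {A X : LamF S} (h : Par (.lam A) X) : ∃ A', X = .lam A' ∧ Par A A' := by
  cases h with
  | lam h => exact ⟨_, rfl, h⟩
  | ax h => exact absurd h FAx.not_lam

theorem Par.app_var_inv {n : ℕ} {B C X : LamF S} (h : Par (.app (.app (.var n) B) C) X) :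
    ∃ B' C', X = .app (.app (.var n) B') C' ∧ Par B B' ∧ Par C C' := by
  -- A spine with a variable head is never an `F`-redex.
  have key : ∀ (l : List (LamF S)) (f : S.Sym), apps (LamF.const f) l ≠ .app (.var n) B ∧
      apps (LamF.const f) l ≠ .app (.app (.var n) B) C ∧ apps (LamF.const f) l ≠ .var n := by
    intro l f
    induction l using List.reverseRecOn with
    | nil => simp [apps]
    | append_singleton l b ih =>
      simp only [apps_concat]
      refine ⟨?_, ?_, by simp⟩
      · intro h; exact ih.2.2 (app.inj h).1
      · intro h; exact ih.1 (app.inj h).1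
  have noax : ∀ {M N : LamF S}, FAx M N → M ≠ .app (.var n) B ∧
      M ≠ .app (.app (.var n) B) C := by
    rintro _ _ ⟨f, a⟩
    exact ⟨(key _ f).1, (key _ f).2.1⟩
  cases h with
  | app hA hC =>
    cases hA with
    | app hv hB =>
      obtain rfl := hv.var_inv
      exact ⟨_, _, rfl, hB, hC⟩
    | ax h => exact absurd rfl (noax h).1
  | ax h => exact absurd rfl (noax h).2

theorem Par.Ktrue_inv {X : LamF S} (h : Par Ktrue X) : X = Ktrue := by
  obtain ⟨_, rfl, h₁⟩ := h.lam_inv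
  obtain ⟨_, rfl, h₂⟩ := h₁.lam_inv
  rw [h₂.var_inv]; rfl

theorem Par.Kfalse_inv {X : LamF S} (h : Par Kfalse X) : X = Kfalse := by
  obtain ⟨_, rfl, h₁⟩ := h.lam_inv
  obtain ⟨_, rfl, h₂⟩ := h₁.lam_inv
  rw [h₂.var_inv]; rfl

theorem Par.num_inv {n : ℕ} {X : LamF S} (h : Par (num n) X) : X = num n := by
  induction n generalizing X with
  | zero =>
    obtain ⟨_, rfl, h₀⟩ := h.lam_inv
    obtain ⟨_, _, rfl, h₁, h₂⟩ := h₀.app_var_inv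
    rw [h₁.Ktrue_inv, h₂.Kfalse_inv]; rfl
  | succ n ih =>
    obtain ⟨_, rfl, h₀⟩ := h.lam_inv
    obtain ⟨_, _, rfl, h₁, h₂⟩ := h₀.app_var_inv
    rw [h₁.Kfalse_inv, ih h₂]; rfl

theorem Par.enc_inv {D : Dt} {a : D.carrier} {X : LamF S} (h : Par (enc D a) X) :
    X = enc D a := by
  cases D with
  | nat => exact Par.num_inv h
  | bool =>
    cases a
    · exact Par.Kfalse_inv h
    · exact Par.Ktrue_inv h

/-- A spine headed by `c_f` with normal arguments, at most as many as the arity of `f`, can only be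
contracted at its root. -/
theorem Par.apps_const_inv {f : S.Sym} {l : List (LamF S)}
    (hl : ∀ x ∈ l, ∀ y, Par x y → y = x) (hlen : l.length ≤ S.arity f) {X : LamF S}
    (h : Par (apps (.const f) l) X) :
    X = apps (.const f) l ∨ FAx (apps (.const f) l) X := by
  induction l using List.reverseRecOn generalizing X with
  | nil =>
    cases h with
    | const => exact .inl rfl
    | ax h => exact .inr h
  | append_singleton l b ih =>
    simp only [List.length_append, List.length_singleton] at hlen
    rw [apps_concat] at h ⊢
    generalize hA : apps (LamF.const f) l = A at h
    cases h with
    | app hA' hB =>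
      subst hA
      rw [hl b (by simp) _ hB]
      rcases ih (fun x hx => hl x (by simp [hx])) (by omega) hA' with rfl | h
      · exact .inl rfl
      · have := h.length_eq
        omega
    | beta _ _ => exact absurd hA (apps_const_ne_lam _ _ _)
    | ax h => subst hA; exact .inr h

theorem FAx.par_inv {M N X : LamF S} (h : FAx M N) (hX : Par M X) : X = M ∨ X = N := by
  have hax := h
  obtain ⟨f, a⟩ := h
  refine (Par.apps_const_inv ?_ (by simp) hX).imp_right fun h => h.unique hax
  intro x hx y hy
  obtain ⟨i, rfl⟩ := (List.mem_ofFn' _ _).1 hx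
  exact hy.enc_inv

theorem FAx.par_join {M N X : LamF S} (h : FAx M N) (hX : Par M X) : Par X N := by
  rcases h.par_inv hX with rfl | rfl
  · exact .ax h
  · exact .refl _

theorem Par.diamond {M N₁ N₂ : LamF S} (h₁ : Par M N₁) (h₂ : Par M N₂) :
    ∃ P, Par N₁ P ∧ Par N₂ P := by
  induction h₁ generalizing N₂ with
  | var n => exact ⟨N₂, h₂, .refl _⟩
  | const c => exact ⟨N₂, h₂, .refl _⟩
  | lam _ ih =>
    obtain ⟨_, rfl, h⟩ := h₂.lam_inv
    obtain ⟨P, hP₁, hP₂⟩ := ih h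
    exact ⟨_, .lam hP₁, .lam hP₂⟩
  | ax h => exact ⟨_, .refl _, h.par_join h₂⟩
  | app hA hB ihA ihB =>
    cases h₂ with
    | app hA₂ hB₂ =>
      obtain ⟨P, hP₁, hP₂⟩ := ihA hA₂
      obtain ⟨Q, hQ₁, hQ₂⟩ := ihB hB₂
      exact ⟨_, .app hP₁ hQ₁, .app hP₂ hQ₂⟩
    | beta hA₂ hB₂ =>
      obtain ⟨Q, hQ₁, hQ₂⟩ := ihB hB₂
      obtain ⟨P, hP₁, hP₂⟩ := ihA (.lam hA₂)
      obtain ⟨_, rfl, _⟩ := hA.lam_inv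
      obtain ⟨R, rfl, hR₁⟩ := hP₁.lam_inv
      obtain ⟨R', hR', hR₂⟩ := hP₂.lam_inv
      obtain rfl := lam.inj hR'
      exact ⟨_, .beta hR₁ hQ₁, hR₂.subst hQ₂ 0⟩
    | ax h => exact ⟨_, h.par_join (.app hA hB), .refl _⟩
  | beta hA hB ihA ihB =>
    cases h₂ with
    | app hA₂ hB₂ =>
      obtain ⟨_, rfl, hA₃⟩ := hA₂.lam_inv
      obtain ⟨P, hP₁, hP₂⟩ := ihA hA₃
      obtain ⟨Q, hQ₁, hQ₂⟩ := ihB hB₂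
      exact ⟨_, hP₁.subst hQ₁ 0, .beta hP₂ hQ₂⟩
    | beta hA₂ hB₂ =>
      obtain ⟨P, hP₁, hP₂⟩ := ihA hA₂
      obtain ⟨Q, hQ₁, hQ₂⟩ := ihB hB₂
      exact ⟨_, hP₁.subst hQ₁ 0, hP₂.subst hQ₂ 0⟩
    | ax h => exact ⟨_, h.par_join (.beta hA hB), .refl _⟩

/-! ### Comparison with one-step reduction -/

theorem Step.par {M N : LamF S} (h : Step M N) : Par M N := by
  rcases h with h | h
  · induction h with
    | beta M N => exact .beta (.refl _) (.refl _)
    | appL N _ ih => exact .app ih (.refl _)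
    | appR M _ ih => exact .app (.refl _) ih
    | abs _ ih => exact .lam ih
  · induction h with
    | ax h => exact .ax h
    | appL N _ ih => exact .app ih (.refl _)
    | appR M _ ih => exact .app (.refl _) ih
    | abs _ ih => exact .lam ih

theorem Star.app {A A' B B' : LamF S} (hA : Star A A') (hB : Star B B') :
    Star (app A B) (app A' B') :=
  Relation.ReflTransGen.trans
    (Relation.ReflTransGen.lift (fun X => LamF.app X B)
      (fun _ _ h => h.imp (.appL B) (.appL B)) _ _ hA)
    (Relation.ReflTransGen.lift (fun X => LamF.app A' X)
      (fun _ _ h => h.imp (.appR A') (.appR A')) _ _ hB)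

theorem Star.lam {A A' : LamF S} (hA : Star A A') : Star (lam A) (lam A') :=
  Relation.ReflTransGen.lift LamF.lam (fun _ _ h => h.imp .abs .abs) _ _ hA

theorem Par.star {M N : LamF S} (h : Par M N) : Star M N := by
  induction h with
  | var n => exact .refl
  | const c => exact .refl
  | app _ _ ihA ihB => exact ihA.app ihB
  | lam _ ih => exact ih.lam
  | beta _ _ ihA ihB => exact Relation.ReflTransGen.tail (ihA.lam.app ihB) (.inl (.beta _ _))
  | ax h => exact Relation.ReflTransGen.single (.inr (.ax h))

theorem star_of_parStar {M N : LamF S} (h : Relation.ReflTransGen Par M N) : Star M N := by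
  induction h with
  | refl => exact .refl
  | tail _ h ih => exact Relation.ReflTransGen.trans ih h.star

end LamF

/-- The Λ_F-calculus is confluent (Church–Rosser for β- together with F-reduction). -/
theorem lamF_confluent (S : Sig) (M N' N'' : LamF S)
    (h' : LamF.Star M N') (h'' : LamF.Star M N'') :
    ∃ P : LamF S, LamF.Star N' P ∧ LamF.Star N'' P := by
  have hle : (LamF.Step : LamF S → LamF S → Prop) ≤ LamF.Par := fun _ _ h => h.par
  obtain ⟨P, h₁, h₂⟩ := Relation.church_rosser (r := LamF.Par)
    (fun _ _ _ hb hc =>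
      let ⟨d, hbd, hcd⟩ := LamF.Par.diamond hb hc
      ⟨d, .single hbd, .single hcd⟩)
    (Relation.ReflTransGen.mono hle _ _ h') (Relation.ReflTransGen.mono hle _ _ h'')
  exact ⟨P, LamF.star_of_parStar h₁, LamF.star_of_parStar h₂⟩
end
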